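/- Let a_1 > a_2 > … > a_n > 0 and let ‖x‖ = a_1 x_1^* + … + a_n x_n^* be the norm of the Lorentz space ℓ_{w,1}^n on ℝ^n. Let B^* = { y ∈ ℝ^n : Σ_{i=1}^n x_i y_i ≤ 1 for every x with ‖x‖ ≤ 1 } be the unit ball of the dual norm. Then the set of extreme points of B^* is exactly the set of all sign-changed permutations of (a_1, …, a_n), i.e., { (ε_1 a_{σ(1)}, …, ε_n a_{σ(n)}) : σ a permutation of {1,…,n}, ε_i ∈ {−1, 1} }. -/

import Mathlib

/-- The non-increasing rearrangement of `(|x 0|, …, |x (n-1)|)`. -/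
noncomputable def dstar {n : ℕ} (x : Fin n → ℝ) : Fin n → ℝ :=
  fun i => |x (Tuple.sort (fun j => -|x j|) i)|

/-!
By the rearrangement inequality, the Lorentz norm is the support function of the finite set `S` of
sign-changed permutations of `a`. By Hahn–Banach, the dual unit ball is therefore the convex hull
of `S`, so its extreme points lie in `S`. Conversely, `S` lies on a Euclidean sphere, and by strict
convexity of the Euclidean ball every point of a subset of a sphere is extreme in its convex hull.
-/

open Set Metric

section ConvexHull

lemma extremePoints_convexHull_eq_of_subset_sphere {E : Type*} [NormedAddCommGroup E]
    [NormedSpace ℝ E] [StrictConvexSpace ℝ E] {S : Set E} {c : E} {r : ℝ}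
    (hS : S ⊆ sphere c r) : (convexHull ℝ S).extremePoints ℝ = S := by
  have hball : convexHull ℝ S ⊆ closedBall c r :=
    convexHull_min (hS.trans sphere_subset_closedBall) (convex_closedBall c r)
  have hsphere : sphere c r ⊆ (closedBall c r).extremePoints ℝ := by
    rcases eq_or_ne r 0 with rfl | hr
    · simp only [sphere_zero, closedBall_zero, extremePoints_singleton, Subset.rfl]
    · exact StrictConvexSpace.sphere_subset_extremePoints_closedBall c hr
  exact extremePoints_convexHull_subset.antisymm fun s hs =>
    inter_extremePoints_subset_extremePoints_of_subset hball
      ⟨subset_convexHull ℝ S hs, hsphere (hS hs)⟩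

variable {ι : Type*} [Fintype ι]

lemma extremePoints_convexHull_eq_of_sum_sq_eq {S : Set (ι → ℝ)} {c : ℝ}
    (hS : ∀ s ∈ S, ∑ i, s i ^ 2 = c) : (convexHull ℝ S).extremePoints ℝ = S := by
  -- `ι → ℝ` carries the sup norm, which is not strictly convex.
  let e : (ι → ℝ) ≃ₗ[ℝ] EuclideanSpace ℝ ι := (WithLp.linearEquiv 2 ℝ (ι → ℝ)).symm
  have hsphere : e '' S ⊆ sphere 0 √c := by
    rintro _ ⟨s, hs, rfl⟩
    simp [e, EuclideanSpace.norm_eq, hS s hs]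
  apply e.injective.image_injective
  rw [image_extremePoints, ← LinearEquiv.coe_coe, LinearMap.image_convexHull]
  exact extremePoints_convexHull_eq_of_subset_sphere hsphere

end ConvexHull

section DualUnitBall

variable {ι : Type*} [Fintype ι] {N : (ι → ℝ) → ℝ} {S : Set (ι → ℝ)}

/-- The one-sided polar of `{x | N x ≤ 1}` for the pairing `x ⬝ᵥ y = ∑ i, x i * y i`: the unit ball
of the dual norm when `N` is a norm. -/
def dualUnitBall (N : (ι → ℝ) → ℝ) : Set (ι → ℝ) :=
  {y | ∀ x, N x ≤ 1 → x ⬝ᵥ y ≤ 1}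

lemma mem_dualUnitBall_iff_forall_dotProduct_le (hnonneg : ∀ x, 0 ≤ N x)
    (hsmul : ∀ r, 0 < r → ∀ x, N (r • x) ≤ r * N x) {y : ι → ℝ} :
    y ∈ dualUnitBall N ↔ ∀ x, x ⬝ᵥ y ≤ N x := by
  refine ⟨fun hy x => ?_, fun hy x hx => (hy x).trans hx⟩
  -- Scaling by `r > N x` instead of `N x` itself covers the case `N x = 0`.
  refine le_of_forall_gt_imp_ge_of_dense fun r hr => ?_
  have hr0 : 0 < r := (hnonneg x).trans_lt hr
  have hunit : N (r⁻¹ • x) ≤ 1 :=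
    (hsmul _ (inv_pos.mpr hr0) x).trans (inv_mul_le_one_of_le₀ hr.le hr0.le)
  have hpair := hy _ hunit
  rwa [smul_dotProduct, smul_eq_mul, inv_mul_le_iff₀ hr0, mul_one] at hpair

lemma apply_smul_le_of_isLUB_dotProduct (hN : ∀ x, IsLUB ((x ⬝ᵥ ·) '' S) (N x)) {r : ℝ}
    (hr : 0 ≤ r) (x : ι → ℝ) : N (r • x) ≤ r * N x := by
  refine (hN _).2 (forall_mem_image.mpr fun s hs => ?_)
  rw [smul_dotProduct, smul_eq_mul]
  exact mul_le_mul_of_nonneg_left ((hN x).1 (mem_image_of_mem _ hs)) hr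

lemma mem_closedConvexHull_iff_forall_dotProduct_le (hN : ∀ x, IsLUB ((x ⬝ᵥ ·) '' S) (N x))
    {y : ι → ℝ} : y ∈ closedConvexHull ℝ S ↔ ∀ x, x ⬝ᵥ y ≤ N x := by
  classical
  refine ⟨fun hy x => ?_, fun hy => ?_⟩
  · have hsub : S ⊆ {z | x ⬝ᵥ z ≤ N x} := fun s hs => (hN x).1 (mem_image_of_mem _ hs)
    have hconvex : Convex ℝ {z | x ⬝ᵥ z ≤ N x} :=
      convex_halfSpace_le (dotProductEquiv ℝ ι x).isLinear (N x)
    have hclosed : IsClosed {z | x ⬝ᵥ z ≤ N x} :=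
      isClosed_le (by fun_prop) continuous_const
    exact closedConvexHull_min hsub hconvex hclosed hy
  · by_contra hnot
    obtain ⟨f, u, hfu, huf⟩ :=
      geometric_hahn_banach_closed_point convex_closedConvexHull isClosed_closedConvexHull hnot
    obtain ⟨x, hx⟩ := (dotProductEquiv ℝ ι).surjective f
    have hfx (z : ι → ℝ) : f z = x ⬝ᵥ z := (LinearMap.congr_fun hx z).symm
    have hNu : N x ≤ u := (hN x).2 <| forall_mem_image.mpr fun s hs =>
      (hfx s).symm.trans_le (hfu s (subset_closedConvexHull hs)).le
    exact ((hy x).trans hNu).not_gt (huf.trans_eq (hfx y))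

theorem dualUnitBall_eq_closedConvexHull (hnonneg : ∀ x, 0 ≤ N x)
    (hN : ∀ x, IsLUB ((x ⬝ᵥ ·) '' S) (N x)) : dualUnitBall N = closedConvexHull ℝ S := by
  ext y
  rw [mem_dualUnitBall_iff_forall_dotProduct_le hnonneg fun r hr =>
      apply_smul_le_of_isLUB_dotProduct hN hr.le,
    mem_closedConvexHull_iff_forall_dotProduct_le hN]

end DualUnitBall

section SignedPerms

variable {ι : Type*} {a s : ι → ℝ}

/-- The sign-changed permutations of the family `a`, the signs `ε` being real numbers. -/
def signedPerms (a : ι → ℝ) : Set (ι → ℝ) :=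
  {y | ∃ (σ : Equiv.Perm ι) (ε : ι → ℝ),
    (∀ i, ε i = 1 ∨ ε i = -1) ∧ y = fun i => ε i * a (σ i)}

lemma mem_signedPerms_iff_abs :
    s ∈ signedPerms a ↔ ∃ σ : Equiv.Perm ι, ∀ i, |s i| = |a (σ i)| := by
  constructor
  · rintro ⟨σ, ε, hε, rfl⟩
    refine ⟨σ, fun i => ?_⟩
    rcases hε i with h | h <;> simp [h]
  · rintro ⟨σ, hσ⟩
    have hsign (i : ι) : ∃ ε : ℝ, (ε = 1 ∨ ε = -1) ∧ s i = ε * a (σ i) := by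
      simpa [or_and_right, exists_or] using abs_eq_abs.mp (hσ i)
    choose ε hε hs using hsign
    exact ⟨σ, ε, hε, funext hs⟩

lemma finite_signedPerms [Finite ι] (a : ι → ℝ) : (signedPerms a).Finite := by
  refine (Finite.pi' fun _ => (finite_range a).union (finite_range (-a))).subset fun s hs i => ?_
  obtain ⟨σ, hσ⟩ := mem_signedPerms_iff_abs.mp hs
  exact (abs_eq_abs.mp (hσ i)).imp (fun h => ⟨σ i, h.symm⟩) fun h => ⟨σ i, h.symm⟩

lemma sum_sq_eq_of_mem_signedPerms [Fintype ι] (hs : s ∈ signedPerms a) :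
    ∑ i, s i ^ 2 = ∑ i, a i ^ 2 := by
  obtain ⟨σ, hσ⟩ := mem_signedPerms_iff_abs.mp hs
  calc ∑ i, s i ^ 2 = ∑ i, a (σ i) ^ 2 :=
        Finset.sum_congr rfl fun i _ => (sq_eq_sq_iff_abs_eq_abs _ _).mpr (hσ i)
    _ = ∑ i, a i ^ 2 := Equiv.sum_comp σ fun i => a i ^ 2

end SignedPerms

section Lorentz

variable {n : ℕ} {a : Fin n → ℝ}

/-- The Lorentz norm `∑ i, a i * x_i^*` of `ℓ_{w,1}^n`. It is defined for arbitrary real weights,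
but is a seminorm only when they are nonnegative and non-increasing. -/
noncomputable def lorentzNorm (a x : Fin n → ℝ) : ℝ :=
  a ⬝ᵥ dstar x

lemma lorentzNorm_nonneg (ha : ∀ i, 0 ≤ a i) (x : Fin n → ℝ) : 0 ≤ lorentzNorm a x :=
  dotProduct_nonneg_of_nonneg ha fun _ => abs_nonneg _

lemma antitone_dstar (x : Fin n → ℝ) : Antitone (dstar x) := fun _ _ hij =>
  neg_le_neg_iff.mp (Tuple.monotone_sort (fun j => -|x j|) hij)

lemma dotProduct_le_lorentzNorm_of_mem_signedPerms (ha : ∀ i, 0 ≤ a i) (hanti : Antitone a)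
    {s : Fin n → ℝ} (hs : s ∈ signedPerms a) (x : Fin n → ℝ) : x ⬝ᵥ s ≤ lorentzNorm a x := by
  obtain ⟨σ, hσ⟩ := mem_signedPerms_iff_abs.mp hs
  let τ := Tuple.sort fun j => -|x j|
  calc x ⬝ᵥ s ≤ ∑ i, a (σ i) * |x i| := Finset.sum_le_sum fun i _ => by
        rw [← abs_of_nonneg (ha (σ i)), ← hσ i, mul_comm, ← abs_mul]
        exact le_abs_self _
    _ = ∑ i, a ((τ.trans σ) i) * dstar x i := (Equiv.sum_comp τ fun i => a (σ i) * |x i|).symm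
    _ ≤ lorentzNorm a x :=
        (hanti.monovary (antitone_dstar x)).sum_comp_perm_mul_le_sum_mul

lemma exists_mem_signedPerms_dotProduct_eq_lorentzNorm (a x : Fin n → ℝ) :
    ∃ s ∈ signedPerms a, x ⬝ᵥ s = lorentzNorm a x := by
  let τ := Tuple.sort fun j => -|x j|
  let ε (i : Fin n) : ℝ := if 0 ≤ x i then 1 else -1
  have hε (i : Fin n) : x i * ε i = |x i| := by
    by_cases h : 0 ≤ x i
    · simp [ε, h, abs_of_nonneg]
    · simp [ε, h, abs_of_neg (not_le.mp h)]
  refine ⟨fun i => ε i * a (τ.symm i), ⟨τ.symm, ε, fun i => ite_eq_or_eq _ _ _, rfl⟩, ?_⟩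
  calc ∑ i, x i * (ε i * a (τ.symm i)) = ∑ i, |x i| * a (τ.symm i) := by
        simp only [← mul_assoc, hε]
    _ = ∑ i, |x (τ i)| * a (τ.symm (τ i)) :=
        (Equiv.sum_comp τ fun i => |x i| * a (τ.symm i)).symm
    _ = ∑ i, a i * dstar x i := by
        simp only [Equiv.symm_apply_apply, mul_comm, dstar, τ]

lemma isGreatest_lorentzNorm (ha : ∀ i, 0 ≤ a i) (hanti : Antitone a) (x : Fin n → ℝ) :
    IsGreatest ((x ⬝ᵥ ·) '' signedPerms a) (lorentzNorm a x) :=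
  ⟨exists_mem_signedPerms_dotProduct_eq_lorentzNorm a x,
    forall_mem_image.mpr fun _ hs => dotProduct_le_lorentzNorm_of_mem_signedPerms ha hanti hs x⟩

theorem dualUnitBall_lorentzNorm (ha : ∀ i, 0 ≤ a i) (hanti : Antitone a) :
    dualUnitBall (lorentzNorm a) = convexHull ℝ (signedPerms a) := by
  rw [dualUnitBall_eq_closedConvexHull (lorentzNorm_nonneg ha)
      fun x => (isGreatest_lorentzNorm ha hanti x).isLUB,
    closedConvexHull_eq_closure_convexHull,
    ((finite_signedPerms a).isClosed_convexHull (𝕜 := ℝ)).closure_eq]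

theorem stmt18_general (ha : ∀ i, 0 ≤ a i) (hanti : Antitone a) :
    (dualUnitBall (lorentzNorm a)).extremePoints ℝ = signedPerms a := by
  rw [dualUnitBall_lorentzNorm ha hanti]
  exact extremePoints_convexHull_eq_of_sum_sq_eq fun _ => sum_sq_eq_of_mem_signedPerms

end Lorentz

/-- For strictly decreasing positive weights `a`, the extreme points of the
unit ball of the dual of `ℓ_{w,1}^n` are exactly the sign-changed
permutations of `(a 0, …, a (n-1))`. -/
theorem stmt18 (n : ℕ) (hn : 1 ≤ n) (a : Fin n → ℝ)
    (hpos : ∀ i, 0 < a i) (hanti : StrictAnti a) :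
    Set.extremePoints ℝ
        {y : Fin n → ℝ | ∀ x : Fin n → ℝ,
          (∑ i, a i * dstar x i) ≤ 1 → (∑ i, x i * y i) ≤ 1} =
      {y : Fin n → ℝ | ∃ (σ : Equiv.Perm (Fin n)) (ε : Fin n → ℝ),
        (∀ i, ε i = 1 ∨ ε i = -1) ∧ y = fun i => ε i * a (σ i)} :=
  stmt18_general (fun i => (hpos i).le) hanti.antitone
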